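/- Let D ≥ 2 and r ≥ 3 be integers. Then |I_{⌊Dr/4⌋, ⌊Dr/4⌋, 0}| > (1/(√2·π·D))·√((r−2)/(r+2))·((r+2)^{r+2}/(r−2)^{r−2})^{D/4}·exp(−(5/(24D))·(r²+4)/(r²−4)). -/

import Mathlib

lemma card_comp (α : Type) [Fintype α] [DecidableEq α] (n : ℕ) :
    Nat.card {f : Option α → ℕ // ∑ i, f i = n} = (n + Fintype.card α).choose (Fintype.card α) := by
  rw [← Nat.card_congr (Sym.equivNatSumOfFintype (Option α) n), Nat.card_eq_fintype_card,
    Sym.card_sym_eq_choose, Fintype.card_option, ← Nat.choose_symm_add]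
  congr 1
  omega

lemma log_bd {x : ℝ} (hx : 0 < x) :
    (x + 1/2) * Real.log (1 + x⁻¹) ≤ 1 + 1 / (12 * x * (x + 1)) := by
  have h := (Real.hasSum_log_one_add_inv hx).mul_left (x + 1/2)
  set y : ℝ := 1 / (2 * x + 1) with hy
  have hy0 : 0 < y := by positivity
  have hy1 : y < 1 := by rw [hy, div_lt_one (by positivity)]; linarith
  have hxy : (x + 1/2) * (2 * y) = 1 := by rw [hy]; field_simp
  have hy2 : y ^ 2 < 1 := by nlinarith
  have hg := (hasSum_geometric_of_lt_one (by positivity) hy2).mul_left (1/3 : ℝ)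
  have hg2 := hg.add (hasSum_ite_eq 0 (2/3 : ℝ))
  have hle := hasSum_le (fun k => ?_) h hg2
  · refine hle.trans (le_of_eq ?_)
    have : 1 - y ^ 2 ≠ 0 := by linarith
    have e : 1 - y ^ 2 = 4 * x * (x + 1) * y ^ 2 := by rw [hy]; field_simp; ring
    rw [e, hy]
    field_simp
    ring
  · have e : (x + 1/2) * (2 * (1 / (2 * (k:ℝ) + 1)) * y ^ (2 * k + 1)) =
        1 / (2 * (k:ℝ) + 1) * (y ^ 2) ^ k := by
      rw [pow_succ, pow_mul]
      linear_combination (1 / (2 * (k:ℝ) + 1) * (y ^ 2) ^ k) * hxy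
    rw [e]
    rcases Nat.eq_zero_or_pos k with rfl | hk
    · norm_num
    · have : k ≠ 0 := by omega
      simp only [this, if_false, add_zero]
      gcongr
      have : (1:ℝ) ≤ k := by exact_mod_cast hk
      linarith

noncomputable def gst (x : ℝ) : ℝ := (x - 1/2) * Real.log x - x

lemma gst_step {x : ℝ} (hx : 1/2 ≤ x) : gst (x + 1) - gst x ≤ Real.log (x + 1/4) := by
  have h0 : 0 < x := by linarith
  have h := log_bd h0
  have e1 : Real.log (1 + x⁻¹) = Real.log (x + 1) - Real.log x := by
    rw [← Real.log_div (by positivity) (by positivity)]; congr 1; field_simp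
  have e2 : Real.log (x + 1/4) = Real.log x + Real.log (1 + 1/(4*x)) := by
    rw [← Real.log_mul (by positivity) (by positivity)]; congr 1; field_simp
  have h3 := Real.one_sub_inv_le_log_of_pos (show 0 < 1 + 1/(4*x) by positivity)
  have h4 : 1 / (12 * x * (x + 1)) ≤ 1 - (1 + 1/(4*x))⁻¹ := by
    have : 1 - (1 + 1/(4*x))⁻¹ = 1 / (4 * x + 1) := by field_simp; ring
    rw [this]
    apply one_div_le_one_div_of_le (by positivity)
    nlinarith
  rw [e1] at h
  rw [e2]; unfold gst
  linarith

lemma prod_lower {B : ℝ} (hB : 1/2 ≤ B) (D : ℕ) :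
    Real.exp (gst (B + D) - gst B) ≤ ∏ i ∈ Finset.range D, (B + i + 1/4) := by
  induction D with
  | zero => simp
  | succ n ih =>
    rw [Finset.prod_range_succ]
    have h := gst_step (x := B + n) (by have : (0:ℝ) ≤ n := by positivity
                                        linarith)
    have hp : 0 < B + n + 1/4 := by positivity
    have : gst (B + ((n+1 : ℕ):ℝ)) - gst B = (gst (B + n) - gst B) + (gst (B + n + 1) - gst (B + n)) := by
      push_cast; rw [← add_assoc]; ring
    rw [this, Real.exp_add]
    gcongr
    rw [← Real.exp_log hp]
    exact Real.exp_le_exp.2 h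

lemma stir_upper (n : ℕ) (hn : 1 ≤ n) :
    Stirling.stirlingSeq n ≤ Real.sqrt Real.pi * Real.exp (1 / (12 * n)) := by
  have hpos : ∀ k : ℕ, 0 < Stirling.stirlingSeq (k+1) := Stirling.stirlingSeq'_pos
  let b : ℕ → ℝ := fun k => Stirling.stirlingSeq (k+1) * Real.exp (- (1 / (12 * ((k:ℝ)+1))))
  have hb : Monotone b := by
    apply monotone_nat_of_le_succ
    intro k
    have h1 := log_bd (x := (k:ℝ)+1) (by positivity)
    have key : Real.log (Stirling.stirlingSeq (k+1)) - Real.log (Stirling.stirlingSeq (k+2))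
        ≤ 1 / (12 * ((k:ℝ)+1) * (k + 1 + 1)) := by
      rw [Stirling.log_stirlingSeq_formula, Stirling.log_stirlingSeq_formula]
      rw [show k + 2 = (k+1)+1 from rfl, Nat.factorial_succ (k+1)]
      have e1 : Real.log (1 + ((k:ℝ)+1)⁻¹) = Real.log ((k:ℝ)+1 + 1) - Real.log ((k:ℝ)+1) := by
        rw [← Real.log_div (by positivity) (by positivity)]; congr 1; field_simp
      rw [e1] at h1
      push_cast
      have q1 : (0:ℝ) < (k:ℝ)+1 := by positivity
      have q2 : (0:ℝ) < (k:ℝ)+1+1 := by positivity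
      have q3 : (0:ℝ) < ((k+1).factorial : ℝ) := by positivity
      rw [Real.log_mul q2.ne' q3.ne', Real.log_mul two_ne_zero q1.ne', Real.log_mul two_ne_zero q2.ne',
        Real.log_div q1.ne' (Real.exp_pos 1).ne', Real.log_div q2.ne' (Real.exp_pos 1).ne', Real.log_exp]
      linarith
    change Stirling.stirlingSeq (k+1) * Real.exp (- (1 / (12 * ((k:ℝ)+1)))) ≤ Stirling.stirlingSeq (k+1+1) * Real.exp (- (1 / (12 * (((k+1:ℕ):ℝ)+1))))
    rw [← Real.exp_log (hpos k), ← Real.exp_log (hpos (k+1)), ← Real.exp_add, ← Real.exp_add]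
    apply Real.exp_le_exp.2
    have : 1 / (12 * ((k:ℝ)+1) * (k + 1 + 1)) = 1 / (12 * ((k:ℝ)+1)) - 1 / (12 * (((k+1:ℕ):ℝ)+1)) := by
      push_cast; field_simp; ring
    rw [this] at key
    rw [show k + 1 + 1 = k + 2 from rfl]
    linarith
  have hlim : Filter.Tendsto b Filter.atTop (nhds (Real.sqrt Real.pi)) := by
    have h1 := Stirling.tendsto_stirlingSeq_sqrt_pi.comp (Filter.tendsto_add_atTop_nat 1)
    have h2 : Filter.Tendsto (fun k : ℕ => Real.exp (- (1 / (12 * ((k:ℝ)+1))))) Filter.atTop (nhds 1) := by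
      have := (tendsto_one_div_add_atTop_nhds_zero_nat (𝕜 := ℝ)).mul_const (-1/12)
      have := (Real.continuous_exp.tendsto _).comp this
      rw [zero_mul, Real.exp_zero] at this
      refine this.congr (fun k => ?_)
      simp only [Function.comp]
      congr 1; field_simp
    have h3 := h1.mul h2
    rw [mul_one] at h3
    exact h3
  obtain ⟨m, rfl⟩ : ∃ m, n = m + 1 := ⟨n-1, by omega⟩
  have := hb.ge_of_tendsto hlim m
  simp only [b] at this
  rw [Real.exp_neg, ← div_eq_mul_inv, div_le_iff₀ (Real.exp_pos _)] at this
  push_cast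
  exact this

lemma fact_upper (n : ℕ) (hn : 1 ≤ n) :
    (n.factorial : ℝ) ≤ Real.sqrt Real.pi * Real.exp (1 / (12 * n)) * (Real.sqrt (2 * n) * (n / Real.exp 1) ^ n) := by
  have := stir_upper n hn
  unfold Stirling.stirlingSeq at this
  rwa [div_le_iff₀ (by positivity)] at this

lemma central_lower (n : ℕ) (hn : 1 ≤ n) :
    4 ^ n / Real.sqrt (Real.pi * n) * Real.exp (- (1 / (8 * n))) ≤ ((2 * n).choose n : ℝ) := by
  let b : ℕ → ℝ := fun k => ((2 * (k+1)).choose (k+1) : ℝ) * Real.sqrt (k+1) / 4 ^ (k+1) * Real.exp (1 / (8 * ((k:ℝ)+1)))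
  have hb : Antitone b := by
    apply antitone_nat_of_succ_le
    intro k
    have hc : ((2 * (k+1+1)).choose (k+1+1) : ℝ) * (k+2) = 2 * (2*k+3) * ((2 * (k+1)).choose (k+1) : ℝ) := by
      have := Nat.succ_mul_centralBinom_succ (k+1)
      unfold Nat.centralBinom at this
      have h2 : (((k+1+1) * (2 * (k+1+1)).choose (k+1+1) : ℕ) : ℝ) = ((2 * (2 * (k+1) + 1) * (2 * (k+1)).choose (k+1) : ℕ) : ℝ) := by
        exact_mod_cast this
      push_cast at h2
      linarith
    have hs : (2*(k:ℝ)+3) / (2 * (k+2)) * Real.sqrt (k+2) ≤ Real.sqrt (k+1) * Real.exp (1 / (8 * ((k:ℝ)+1)) - 1 / (8 * ((k:ℝ)+2))) := by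
      apply le_of_sq_le_sq _ (by positivity)
      rw [mul_pow, mul_pow, Real.sq_sqrt (by positivity), Real.sq_sqrt (by positivity), ← Real.exp_nat_mul]
      have h1 := Real.add_one_le_exp (((2:ℕ):ℝ) * (1 / (8 * ((k:ℝ)+1)) - 1 / (8 * ((k:ℝ)+2))))
      refine le_trans (le_of_eq ?_) (mul_le_mul_of_nonneg_left h1 (by positivity))
      push_cast
      field_simp
      ring
    have e : ((2 * (k+1+1)).choose (k+1+1) : ℝ) = 2 * (2*k+3) * ((2 * (k+1)).choose (k+1) : ℝ) / (k+2) := by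
      rw [eq_div_iff (by positivity)]; exact hc
    simp only [b]
    rw [e]
    rw [Real.exp_sub, mul_div_assoc', le_div_iff₀ (Real.exp_pos _)] at hs
    have hm := mul_le_mul_of_nonneg_left hs (show 0 ≤ ((2 * (k+1)).choose (k+1) : ℝ) / 4 ^ (k+1) by positivity)
    have e2 : ((k+1 : ℕ) : ℝ) + 1 = k + 2 := by push_cast; ring
    rw [e2]
    refine le_trans (le_of_eq ?_) (hm.trans (le_of_eq ?_))
    · field_simp; ring
    · field_simp
  have hlim : Filter.Tendsto b Filter.atTop (nhds (Real.sqrt Real.pi)⁻¹) := by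
    have h0 := Stirling.tendsto_stirlingSeq_sqrt_pi
    have h1 := h0.comp (Filter.tendsto_add_atTop_nat 1)
    have h3 : Filter.Tendsto (fun k : ℕ => Stirling.stirlingSeq (2 * (k+1))) Filter.atTop (nhds (Real.sqrt Real.pi)) :=
      h0.comp (Filter.tendsto_atTop_mono (fun k => by show k ≤ _; omega) Filter.tendsto_id)
    have h2 : Filter.Tendsto (fun k : ℕ => Real.exp (1 / (8 * ((k:ℝ)+1)))) Filter.atTop (nhds 1) := by
      have := (tendsto_one_div_add_atTop_nhds_zero_nat (𝕜 := ℝ)).mul_const (1/8)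
      have := (Real.continuous_exp.tendsto _).comp this
      rw [zero_mul, Real.exp_zero] at this
      refine this.congr (fun k => ?_)
      simp only [Function.comp]
      congr 1; field_simp
    have hpi : Real.sqrt Real.pi ≠ 0 := by positivity
    have h4 := (h3.div (h1.pow 2) (by positivity)).mul h2
    have : (Real.sqrt Real.pi)⁻¹ = Real.sqrt Real.pi / Real.sqrt Real.pi ^ 2 * 1 := by field_simp
    rw [this]
    refine h4.congr (fun k => ?_)
    simp only [b, Function.comp, Pi.div_apply]
    congr 1
    have hch : ((2 * (k+1)).choose (k+1) : ℝ) = ((2 * (k+1)).factorial : ℝ) / ((k+1).factorial) ^ 2 := by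
      rw [Nat.cast_choose ℝ (by omega), show 2 * (k+1) - (k+1) = k + 1 by omega, sq]
    rw [hch]
    unfold Stirling.stirlingSeq
    have q : (0:ℝ) < (k:ℝ) + 1 := by positivity
    have s1 : Real.sqrt (2 * ((2 * (k+1) : ℕ) : ℝ)) = 2 * Real.sqrt (k+1) := by
      rw [show (2 * ((2 * (k+1) : ℕ) : ℝ)) = 2 ^ 2 * ((k:ℝ)+1) by push_cast; ring, Real.sqrt_mul (by positivity), Real.sqrt_sq (by norm_num)]
    have s2 : Real.sqrt (2 * ((k+1 : ℕ) : ℝ)) ^ 2 = 2 * (k+1) := by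
      rw [Real.sq_sqrt (by positivity)]; push_cast; ring
    have s3 : Real.sqrt ((k:ℝ)+1) ^ 2 = k + 1 := Real.sq_sqrt q.le
    rw [s1, div_pow ((k+1).factorial : ℝ), mul_pow (Real.sqrt _), s2]
    push_cast
    have t1 : (2 * ((k:ℝ)+1) / Real.exp 1) ^ (2 * (k+1)) = 4 ^ (k+1) * ((((k:ℝ)+1) / Real.exp 1) ^ (k+1)) ^ 2 := by
      rw [mul_div_assoc, mul_pow, pow_mul, ← pow_mul _ (k+1) 2, mul_comm (k+1) 2]; norm_num
    rw [t1]
    have q2 : (0:ℝ) < Real.sqrt ((k:ℝ)+1) := by positivity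
    have q3 : 0 < (((k:ℝ)+1) / Real.exp 1) ^ (k+1) := by positivity
    generalize (((k:ℝ)+1) / Real.exp 1) ^ (k+1) = E at *
    field_simp
    rw [s3]
  obtain ⟨m, rfl⟩ : ∃ m, n = m + 1 := ⟨n-1, by omega⟩
  have := hb.le_of_tendsto hlim m
  simp only [b] at this
  push_cast
  rw [Real.exp_neg, Real.sqrt_mul Real.pi_pos.le]
  have q : (0:ℝ) < Real.sqrt ((m:ℝ)+1) := by positivity
  have q1 : (0:ℝ) < Real.sqrt Real.pi := by positivity
  have q2 := Real.exp_pos (1 / (8 * ((m:ℝ)+1)))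
  generalize Real.exp (1 / (8 * ((m:ℝ)+1))) = E at *
  rw [← div_eq_mul_inv, div_le_iff₀ q2, div_le_iff₀ (by positivity)]
  rw [inv_le_iff_one_le_mul₀ q1] at this
  have h4 : (0:ℝ) < 4 ^ (m+1) := by positivity
  have h5 := mul_le_mul_of_nonneg_left this h4.le
  rw [mul_one] at h5
  refine h5.trans (le_of_eq ?_)
  field_simp

lemma prod_conv (a : ℕ → ℝ) (h : ℝ) (hh : 0 ≤ h) (n : ℕ) (ha : ∀ i, h ≤ a i) :
    2 * ∏ i ∈ Finset.range n, a i ≤ ∏ i ∈ Finset.range n, (a i + h) + ∏ i ∈ Finset.range n, (a i - h) := by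
  induction n with
  | zero => norm_num
  | succ n ih =>
    rw [Finset.prod_range_succ, Finset.prod_range_succ, Finset.prod_range_succ]
    have h1 : ∏ i ∈ Finset.range n, (a i - h) ≤ ∏ i ∈ Finset.range n, (a i + h) :=
      Finset.prod_le_prod (fun i _ => by linarith [ha i]) (fun i _ => by linarith)
    have := mul_le_mul_of_nonneg_right ih (hh.trans (ha n))
    have := mul_nonneg hh (sub_nonneg.2 h1)
    nlinarith

/-- rising product -/
noncomputable def rp (D : ℕ) (x : ℝ) : ℝ := ∏ i ∈ Finset.range D, (x + i + 1)

lemma rp_neg (D : ℕ) (m : ℕ) (h1 : 1 ≤ m) (h2 : m ≤ D) : rp D (-(m:ℝ)) = 0 := by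
  unfold rp
  apply Finset.prod_eq_zero (i := m - 1) (by simp; omega)
  have : ((m - 1 : ℕ) : ℝ) = m - 1 := by push_cast [h1]; ring
  rw [this]; ring

lemma rp_pair (D s k : ℕ) (hk : 2 * k ≤ D) (hs : D < 2 * s + 2) (hD : 1 ≤ D) :
    2 * rp D ((s:ℝ) - D/2) ≤ rp D ((s:ℝ) - k) + rp D ((s:ℝ) - (D - k : ℕ)) := by
  have hkc : ((D - k : ℕ) : ℝ) = D - k := by rw [Nat.cast_sub (by omega)]
  have hkr : 2 * (k:ℝ) ≤ D := by exact_mod_cast hk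
  have hsr : (D:ℝ) < 2 * s + 2 := by exact_mod_cast hs
  by_cases hc : D - k ≤ s
  · have hcr : (D:ℝ) - k ≤ s := by rw [← hkc]; exact_mod_cast hc
    have := prod_conv (fun i => (s:ℝ) - D/2 + i + 1) (D/2 - k) (by linarith) D
      (fun i => by have : (0:ℝ) ≤ i := by positivity
                   linarith)
    unfold rp
    refine this.trans (le_of_eq ?_)
    rw [hkc]
    congr 1 <;> (apply Finset.prod_congr rfl; intros; ring)
  · push Not at hc
    have hcr : (s:ℝ) + 1 ≤ D - k := by rw [← hkc]; exact_mod_cast hc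
    have e : rp D ((s:ℝ) - (D - k : ℕ)) = 0 := by
      have := rp_neg D (D - k - s) (by omega) (by omega)
      rw [← this]; congr 1; push_cast [show s ≤ D - k by omega]; ring
    rw [e, add_zero]
    unfold rp
    obtain ⟨n, rfl⟩ : ∃ n, D = n + 1 := ⟨D-1, by omega⟩
    rw [Finset.prod_range_succ', Finset.prod_range_succ']
    have h1 : ∏ i ∈ Finset.range n, ((s:ℝ) - ((n+1:ℕ):ℝ)/2 + ((i+1:ℕ):ℝ) + 1) ≤
        ∏ i ∈ Finset.range n, ((s:ℝ) - k + ((i+1:ℕ):ℝ) + 1) := by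
      apply Finset.prod_le_prod
      · intro i _; have : (0:ℝ) ≤ ((i+1:ℕ):ℝ) := by positivity
        linarith
      · intro i _; linarith
    have h0 : 0 ≤ ∏ i ∈ Finset.range n, ((s:ℝ) - ((n+1:ℕ):ℝ)/2 + ((i+1:ℕ):ℝ) + 1) := by
      apply Finset.prod_nonneg
      intro i _; have : (0:ℝ) ≤ ((i+1:ℕ):ℝ) := by positivity
      linarith
    have h2 : 2 * ((s:ℝ) - ((n+1:ℕ):ℝ)/2 + ((0:ℕ):ℝ) + 1) ≤ (s:ℝ) - k + ((0:ℕ):ℝ) + 1 := by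
      simp only [Nat.cast_zero]; linarith
    have h3 : 0 ≤ ((s:ℝ) - ((n+1:ℕ):ℝ)/2 + ((0:ℕ):ℝ) + 1) := by
      simp only [Nat.cast_zero]; linarith
    calc _ = _ * (2 * ((s:ℝ) - ((n+1:ℕ):ℝ)/2 + ((0:ℕ):ℝ) + 1)) := by ring
      _ ≤ _ := mul_le_mul h1 h2 (by linarith) (h0.trans h1)

lemma rp_pair' (D s k : ℕ) (hk : k ≤ D) (hs : D < 2 * s + 2) (hD : 1 ≤ D) :
    2 * rp D ((s:ℝ) - D/2) ≤ rp D ((s:ℝ) - k) + rp D ((s:ℝ) - (D - k : ℕ)) := by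
  by_cases h : 2 * k ≤ D
  · exact rp_pair D s k h hs hD
  · have := rp_pair D s (D - k) (by omega) hs hD
    rw [show D - (D - k) = k by omega] at this
    linarith

lemma sum_lower (D s : ℕ) (hs : D < 2 * s + 2) (hD : 1 ≤ D) :
    ((2 * D).choose D : ℝ) * rp D ((s:ℝ) - D/2) ≤
      ∑ k ∈ Finset.range (D+1), (D.choose k : ℝ)^2 * rp D ((s:ℝ) - k) := by
  have h1 : ∑ k ∈ Finset.range (D+1), (D.choose k : ℝ)^2 * rp D ((s:ℝ) - k) =
      ∑ k ∈ Finset.range (D+1), (D.choose k : ℝ)^2 * rp D ((s:ℝ) - (D - k : ℕ)) := by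
    rw [← Finset.sum_range_reflect]
    apply Finset.sum_congr rfl
    intro k hk
    have : k ≤ D := by simp at hk; omega
    rw [show D + 1 - 1 - k = D - k by omega, Nat.choose_symm this]
  have h2 : ((2 * D).choose D : ℝ) = ∑ k ∈ Finset.range (D+1), (D.choose k : ℝ)^2 := by
    rw [← Nat.sum_range_choose_sq]; push_cast; rfl
  have h3 : ∑ k ∈ Finset.range (D+1), (D.choose k : ℝ)^2 * (2 * rp D ((s:ℝ) - D/2)) ≤
     ∑ k ∈ Finset.range (D+1), (D.choose k : ℝ)^2 * (rp D ((s:ℝ) - k) + rp D ((s:ℝ) - (D - k : ℕ))) := by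
    apply Finset.sum_le_sum
    intro k hk
    exact mul_le_mul_of_nonneg_left (rp_pair' D s k (by simp at hk; omega) hs hD) (by positivity)
  simp only [mul_add, Finset.sum_add_distrib] at h3
  rw [← h1, ← Finset.sum_mul, ← h2] at h3
  linarith

lemma term_eq (D s k : ℕ) (hk : k ≤ D) :
    (D.choose k : ℝ)^2 * rp D ((s:ℝ) - k) =
      D.factorial * ((D.choose k : ℝ) * (s.choose k * (s + (D - k)).choose (D - k))) := by
  by_cases h : k ≤ s
  · have e : rp D ((s:ℝ) - k) = ((s - k + D).factorial : ℝ) / (s - k).factorial := by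
      rw [eq_div_iff (by positivity), ← Nat.factorial_mul_ascFactorial, Nat.ascFactorial_eq_prod_range]
      push_cast [h]
      rw [mul_comm]
      congr 1
      unfold rp
      apply Finset.prod_congr rfl; intros; ring
    rw [e, Nat.cast_choose ℝ hk, Nat.cast_choose ℝ h, Nat.cast_choose ℝ (show D - k ≤ s + (D - k) by omega),
      show s + (D - k) - (D - k) = s by omega, show s + (D - k) = s - k + D by omega]
    field_simp
  · push Not at h
    have e : rp D ((s:ℝ) - k) = 0 := by
      rw [← rp_neg D (k - s) (by omega) (by omega)]; congr 1; push_cast [h.le]; ring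
    rw [e, Nat.choose_eq_zero_of_lt h]; simp

def Aset (D s : ℕ) : Set (Fin D → ℤ) := {u : Fin D → ℤ |
        (∑ j, max (u j) 0) ≤ (s : ℤ) ∧ (∑ j, max (-u j) 0) ≤ (s : ℤ)}

lemma Aset_finite (D s : ℕ) : (Aset D s).Finite := by
  apply (Set.finite_Icc (fun _ : Fin D => -(s:ℤ)) (fun _ => (s:ℤ))).subset
  rintro u ⟨h1, h2⟩
  constructor
  · intro j
    have := Finset.single_le_sum (f := fun j => max (-u j) 0) (fun i _ => le_max_right _ _) (Finset.mem_univ j)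
    have h3 := le_max_left (-u j) 0
    simp only at this ⊢
    linarith
  · intro j
    have := Finset.single_le_sum (f := fun j => max (u j) 0) (fun i _ => le_max_right _ _) (Finset.mem_univ j)
    have h3 := le_max_left (u j) 0
    simp only at this ⊢
    linarith

lemma fiber_lower (D s : ℕ) (S : Finset (Fin D)) :
    s.choose S.card * (s + (D - S.card)).choose (D - S.card) ≤
      Set.ncard {u ∈ Aset D s | Finset.univ.filter (fun j => 0 < u j) = S} := by
  by_cases hS : S.card ≤ s
  swap
  · rw [Nat.choose_eq_zero_of_lt (by omega)]; simp
  have c1 := card_comp {j // j ∈ S} (s - S.card)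
  have c2 := card_comp {j // ¬ j ∈ S} s
  rw [Fintype.card_coe, show s - S.card + S.card = s by omega] at c1
  rw [Fintype.card_subtype_compl, Fintype.card_fin, Fintype.card_coe] at c2
  rw [← c1, ← c2, ← Nat.card_prod, ← Nat.card_coe_set_eq]
  have hfin : Finite {u ∈ Aset D s | Finset.univ.filter (fun j => 0 < u j) = S} :=
    ((Aset_finite D s).subset (fun u hu => hu.1)).to_subtype
  let F : ({f : Option {j // j ∈ S} → ℕ // ∑ i, f i = s - S.card} × {f : Option {j // ¬ j ∈ S} → ℕ // ∑ i, f i = s})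
      → (Fin D → ℤ) := fun p j => if h : j ∈ S then (p.1.1 (some ⟨j, h⟩) : ℤ) + 1 else - (p.2.1 (some ⟨j, h⟩) : ℤ)
  have hF1 : ∀ p j (h : j ∈ S), F p j = (p.1.1 (some ⟨j, h⟩) : ℤ) + 1 := fun p j h => by simp [F, h]
  have hF2 : ∀ p j (h : ¬ j ∈ S), F p j = - (p.2.1 (some ⟨j, h⟩) : ℤ) := fun p j h => by simp [F, h]
  have hmem : ∀ p, F p ∈ {u ∈ Aset D s | Finset.univ.filter (fun j => 0 < u j) = S} := by
    intro p
    have s1 := p.1.2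
    have s2 := p.2.2
    rw [Fintype.sum_option] at s1 s2
    refine ⟨⟨?_, ?_⟩, ?_⟩
    · have sp : ∑ j, max (F p j) 0 = ∑ j : {j // j ∈ S}, max (F p j) 0 + ∑ j : {j // ¬ j ∈ S}, max (F p j) 0 := by
        rw [← Fintype.sum_subtype_add_sum_subtype (fun j => j ∈ S)]
        congr!
      rw [sp]
      have e1 : ∑ j : {j // j ∈ S}, max (F p j) 0 = ∑ j : {j // j ∈ S}, ((p.1.1 (some j) : ℤ) + 1) := by
        apply Finset.sum_congr rfl
        rintro ⟨j, hj⟩ _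
        rw [hF1 p j hj, max_eq_left (by positivity)]
      have e2 : ∑ j : {j // ¬ j ∈ S}, max (F p j) 0 = 0 := by
        apply Finset.sum_eq_zero
        rintro ⟨j, hj⟩ _
        rw [hF2 p j hj, max_eq_right (by simp)]
      rw [e1, e2, Finset.sum_add_distrib]
      simp only [Finset.sum_const, Finset.card_univ, Fintype.card_coe]
      rw [← Nat.cast_sum]
      simp only [nsmul_eq_mul, mul_one, add_zero]
      norm_cast
      omega
    · have sp : ∑ j, max (-F p j) 0 = ∑ j : {j // j ∈ S}, max (-F p j) 0 + ∑ j : {j // ¬ j ∈ S}, max (-F p j) 0 := by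
        rw [← Fintype.sum_subtype_add_sum_subtype (fun j => j ∈ S)]
        congr!
      rw [sp]
      have e1 : ∑ j : {j // j ∈ S}, max (-F p j) 0 = 0 := by
        apply Finset.sum_eq_zero
        rintro ⟨j, hj⟩ _
        rw [hF1 p j hj, max_eq_right]
        have : (0:ℤ) ≤ (p.1.1 (some ⟨j, hj⟩) : ℤ) := by positivity
        linarith
      have e2 : ∑ j : {j // ¬ j ∈ S}, max (-F p j) 0 = ∑ j : {j // ¬ j ∈ S}, (p.2.1 (some j) : ℤ) := by
        apply Finset.sum_congr rfl
        rintro ⟨j, hj⟩ _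
        rw [hF2 p j hj, neg_neg, max_eq_left (by positivity)]
      rw [e1, e2, ← Nat.cast_sum, zero_add]
      norm_cast
      omega
    · ext j
      simp only [Finset.mem_filter, Finset.mem_univ, true_and]
      by_cases h : j ∈ S
      · simp only [h, iff_true]; rw [hF1 p j h]; positivity
      · simp only [h, iff_false]; rw [hF2 p j h]; simp
  apply Nat.card_le_card_of_injective (fun p => (⟨F p, hmem p⟩ : {u // u ∈ {u ∈ Aset D s | Finset.univ.filter (fun j => 0 < u j) = S}}))
  intro p q hpq
  have hpq' : F p = F q := congrArg Subtype.val hpq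
  have a1 : ∀ j, p.1.1 (some j) = q.1.1 (some j) := by
    rintro ⟨j, hj⟩
    have := congrFun hpq' j
    rw [hF1 p j hj, hF1 q j hj] at this
    exact_mod_cast add_right_cancel this
  have a2 : ∀ j, p.2.1 (some j) = q.2.1 (some j) := by
    rintro ⟨j, hj⟩
    have := congrFun hpq' j
    rw [hF2 p j hj, hF2 q j hj] at this
    exact_mod_cast neg_injective this
  have s1 := p.1.2
  have s2 := p.2.2
  have t1 := q.1.2
  have t2 := q.2.2
  rw [Fintype.sum_option] at s1 s2 t1 t2
  simp only [a1] at s1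
  simp only [a2] at s2
  apply Prod.ext
  · apply Subtype.ext; funext i
    cases i with
    | none => omega
    | some j => exact a1 j
  · apply Subtype.ext; funext i
    cases i with
    | none => omega
    | some j => exact a2 j

lemma count_lower (D s : ℕ) :
    ∑ k ∈ Finset.range (D+1), D.choose k * (s.choose k * (s + (D - k)).choose (D - k)) ≤ (Aset D s).ncard := by
  classical
  have hf := Aset_finite D s
  rw [Set.ncard_eq_toFinset_card _ hf]
  rw [Finset.card_eq_sum_card_fiberwise (f := fun u : Fin D → ℤ => Finset.univ.filter (fun j => 0 < u j))
    (t := (Finset.univ : Finset (Fin D)).powerset) (fun u _ => by simp)]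
  have : ∑ k ∈ Finset.range (D+1), D.choose k * (s.choose k * (s + (D - k)).choose (D - k)) =
      ∑ S ∈ (Finset.univ : Finset (Fin D)).powerset, (s.choose S.card * (s + (D - S.card)).choose (D - S.card)) := by
    rw [Finset.sum_powerset_apply_card (fun k => s.choose k * (s + (D - k)).choose (D - k))]
    simp
  rw [this]
  apply Finset.sum_le_sum
  intro S _
  refine (fiber_lower D s S).trans (le_of_eq ?_)
  rw [← Set.ncard_coe_finset]
  congr 1
  ext u
  simp

theorem stmt_19 (D r : ℕ) (hD : 2 ≤ D) (hr : 3 ≤ r) :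
    (Set.ncard {u : Fin D → ℤ |
        (∑ j, max (u j) 0) ≤ ((D * r / 4 : ℕ) : ℤ) ∧
        (∑ j, max (-u j) 0) ≤ ((D * r / 4 : ℕ) : ℤ)} : ℝ)
      > (1 / (Real.sqrt 2 * Real.pi * D))
          * Real.sqrt (((r : ℝ) - 2) / ((r : ℝ) + 2))
          * ((((r : ℝ) + 2) ^ (r + 2) / ((r : ℝ) - 2) ^ (r - 2)) ^ ((D : ℝ) / 4))
          * Real.exp (-(5 / (24 * (D : ℝ))) * (((r : ℝ) ^ 2 + 4) / ((r : ℝ) ^ 2 - 4))) := by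
  set s := D * r / 4 with hs
  have hN := count_lower D s
  change ((Aset D s).ncard : ℝ) > _
  have hDr : D * 3 ≤ D * r := Nat.mul_le_mul_left D hr
  have hs4 : D * r ≤ 4 * s + 3 := by omega
  have hs2 : D < 2 * s + 2 := by omega
  have hDR : (2:ℝ) ≤ D := by exact_mod_cast hD
  have hrR : (3:ℝ) ≤ r := by exact_mod_cast hr
  have hs4R : (D:ℝ) * r ≤ 4 * s + 3 := by exact_mod_cast hs4
  have hD0 : (0:ℝ) < D := by linarith
  -- combine counts
  have hN2 : ((2 * D).choose D : ℝ) * rp D ((s:ℝ) - D/2) ≤ D.factorial * ((Aset D s).ncard : ℝ) := by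
    refine (sum_lower D s hs2 (by omega)).trans ?_
    have : (∑ k ∈ Finset.range (D+1), (D.choose k : ℝ) * (s.choose k * (s + (D - k)).choose (D - k))) ≤ ((Aset D s).ncard : ℝ) := by
      exact_mod_cast hN
    refine le_trans (le_of_eq ?_) (mul_le_mul_of_nonneg_left this (by positivity))
    rw [Finset.mul_sum]
    apply Finset.sum_congr rfl
    intro k hk
    exact term_eq D s k (by simp at hk; omega)
  set B : ℝ := D * (r - 2) / 4 with hB
  have hBh : 1/2 ≤ B := by rw [hB]; nlinarith
  have hrp : Real.exp (gst (B + D) - gst B) ≤ rp D ((s:ℝ) - D/2) := by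
    refine (prod_lower hBh D).trans ?_
    unfold rp
    apply Finset.prod_le_prod
    · intro i _; positivity
    · intro i _; rw [hB]; linarith
  have hC := central_lower D (by omega)
  have hFa := fact_upper D (by omega)
  have hFp : (0:ℝ) < D.factorial := by positivity
  have hchain : 4 ^ D / Real.sqrt (Real.pi * D) * Real.exp (- (1 / (8 * D))) * Real.exp (gst (B + D) - gst B)
      ≤ Real.sqrt Real.pi * Real.exp (1 / (12 * D)) * (Real.sqrt (2 * D) * (D / Real.exp 1) ^ D) * ((Aset D s).ncard : ℝ) := by
    refine (mul_le_mul hC hrp (Real.exp_pos _).le (by positivity)).trans (hN2.trans ?_)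
    exact mul_le_mul_of_nonneg_right hFa (by positivity)
  set N : ℝ := ((Aset D s).ncard : ℝ) with hNdef
  have hK : 0 < Real.sqrt Real.pi * Real.exp (1 / (12 * D)) * (Real.sqrt (2 * D) * (D / Real.exp 1) ^ D) := by positivity
  refine lt_of_mul_lt_mul_left (lt_of_lt_of_le ?_ hchain) hK.le
  -- everything in exponential form
  have hr2 : (0:ℝ) < r - 2 := by linarith
  have hr2' : (0:ℝ) < r + 2 := by linarith
  have hr4 : (0:ℝ) < r^2 - 4 := by nlinarith
  have hpow : ((r : ℝ) - 2) ^ (r - 2) = Real.exp ((r - 2) * Real.log (r - 2)) := by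
    rw [mul_comm, ← Real.rpow_def_of_pos hr2, ← Real.rpow_natCast]; congr 1
    push_cast [show 2 ≤ r by omega]; ring
  have hpow2 : ((r : ℝ) + 2) ^ (r + 2) = Real.exp ((r + 2) * Real.log (r + 2)) := by
    rw [mul_comm, ← Real.rpow_def_of_pos hr2', ← Real.rpow_natCast]; congr 1
    push_cast; ring
  have hsq : Real.sqrt (((r : ℝ) - 2) / ((r : ℝ) + 2)) = Real.exp ((Real.log (r - 2) - Real.log (r + 2)) / 2) := by
    rw [Real.sqrt_eq_rpow, Real.rpow_def_of_pos (by positivity), Real.log_div hr2.ne' hr2'.ne']; congr 1; ring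
  have h4D : (4:ℝ)^D = Real.exp (D * Real.log 4) := by
    rw [mul_comm, ← Real.rpow_def_of_pos (by norm_num), Real.rpow_natCast]
  have hDD : (D / Real.exp 1) ^ D = Real.exp (D * (Real.log D - 1)) := by
    rw [show (D:ℝ) / Real.exp 1 = Real.exp (Real.log D - 1) by rw [Real.exp_sub, Real.exp_log hD0], ← Real.exp_nat_mul]
  have hsqs : Real.sqrt Real.pi * Real.sqrt (2 * D) * (1 / (Real.sqrt 2 * Real.pi * D)) = 1 / Real.sqrt (Real.pi * D) := by
    rw [Real.sqrt_mul (by norm_num), Real.sqrt_mul Real.pi_pos.le]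
    have a : Real.sqrt Real.pi ^ 2 = Real.pi := Real.sq_sqrt Real.pi_pos.le
    have b : Real.sqrt D ^ 2 = (D:ℝ) := Real.sq_sqrt hD0.le
    have : 0 < Real.sqrt (D:ℝ) := by positivity
    have : 0 < Real.sqrt Real.pi := by positivity
    field_simp
    rw [a, b]
  rw [hpow, hpow2, hsq, h4D, hDD, ← Real.exp_sub, ← Real.exp_mul]
  have hP : 0 < 1 / Real.sqrt (Real.pi * D) := by positivity
  set X := (Real.log (r - 2) - Real.log (r + 2)) / 2
  set Y := ((r + 2) * Real.log (r + 2) - (r - 2) * Real.log (r - 2)) * ((D:ℝ) / 4) with hY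
  set Z := -(5 / (24 * (D : ℝ))) * (((r : ℝ) ^ 2 + 4) / ((r : ℝ) ^ 2 - 4)) with hZ
  have hZlt : Z < - (5 / (24 * (D:ℝ))) := by
    have h1 : 1 < (((r : ℝ) ^ 2 + 4) / ((r : ℝ) ^ 2 - 4)) := by rw [lt_div_iff₀ hr4]; linarith
    have h2 : 0 < 5 / (24 * (D:ℝ)) := by positivity
    rw [hZ]; nlinarith
  calc _ = (Real.sqrt Real.pi * Real.sqrt (2 * D) * (1 / (Real.sqrt 2 * Real.pi * D))) *
        Real.exp (1 / (12 * D) + D * (Real.log D - 1) + X + Y + Z) := by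
        simp only [Real.exp_add]; ring
    _ = 1 / Real.sqrt (Real.pi * D) * Real.exp (1 / (12 * D) + D * (Real.log D - 1) + X + Y + Z) := by rw [hsqs]
    _ < 1 / Real.sqrt (Real.pi * D) * Real.exp (D * Real.log 4 + (- (1 / (8 * D))) + (gst (B + D) - gst B)) := by
        apply mul_lt_mul_of_pos_left _ hP
        apply Real.exp_lt_exp.2
        have e5 : 5 / (24 * (D:ℝ)) = 1 / (12 * D) + 1 / (8 * D) := by field_simp; norm_num
        have eA : B + D = D * (r + 2) / 4 := by rw [hB]; ring
        have lA : Real.log (B + D) = Real.log D + Real.log (r + 2) - Real.log 4 := by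
          rw [eA, Real.log_div (by positivity) (by norm_num), Real.log_mul hD0.ne' hr2'.ne']
        have lB : Real.log B = Real.log D + Real.log (r - 2) - Real.log 4 := by
          rw [hB, Real.log_div (by positivity) (by norm_num), Real.log_mul hD0.ne' hr2.ne']
        have key : gst (B + D) - gst B + D * Real.log 4 = D * (Real.log D - 1) + X + Y := by
          unfold gst
          rw [lA, lB, eA, hB, hY]
          simp only [X]
          ring
        linarith
    _ = _ := by
        rw [Real.exp_add, Real.exp_add]; ring
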